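/- Let $\beta > 0$, $x \in \mathbb{R}^d$ and $\eta \in \mathcal{P}_2(\mathbb{R}^d)$. Then $\sup_{y \in \mathbb{R}^d}\Big\{-\tfrac{\beta}{2}|x-y|^2 + \inf_{\rho \in \mathcal{P}_2(\mathbb{R}^d)}\big\{H(\rho\,|\,\gamma_y) + \tfrac{\beta}{2}\mathcal{W}_2^2(\rho,\eta)\big\}\Big\} = \inf_{\kappa \in \mathcal{P}_2(\mathbb{R}^d),\ \bar\kappa = \bar\eta}\big\{H(\kappa\,|\,\gamma_x) + \tfrac{\beta}{2}\mathcal{W}_2^2(\kappa,\eta)\big\}$. -/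

import Mathlib

open MeasureTheory ProbabilityTheory Filter Topology Set
open scoped ENNReal RealInnerProductSpace

noncomputable section

abbrev Euc (d : ℕ) := EuclideanSpace ℝ (Fin d)

/-- Density of the Gaussian with mean `x` and identity covariance. -/
def gaussDensity {d : ℕ} (x y : Euc d) : ℝ :=
  (2 * Real.pi) ^ (-(d : ℝ) / 2) * Real.exp (-‖y - x‖ ^ 2 / 2)

/-- Gaussian measure with mean `x` and identity covariance. -/
def gaussian {d : ℕ} (x : Euc d) : Measure (Euc d) :=
  volume.withDensity fun y => ENNReal.ofReal (gaussDensity x y)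

/-- Finite second moment. -/
def FiniteSecondMoment {d : ℕ} (μ : Measure (Euc d)) : Prop :=
  ∫⁻ x, ENNReal.ofReal (‖x‖ ^ 2) ∂μ < ⊤

/-- Barycenter of a measure. -/
def bary {d : ℕ} (μ : Measure (Euc d)) : Euc d := ∫ x, x ∂μ

open Classical in
/-- Relative entropy `H(ρ | η)`, valued in `ℝ≥0∞`. -/
def relEnt {d : ℕ} (ρ η : Measure (Euc d)) : ℝ≥0∞ :=
  if ρ ≪ η ∧ Integrable (fun x => Real.log (ρ.rnDeriv η x).toReal) ρ then
    ENNReal.ofReal (∫ x, Real.log (ρ.rnDeriv η x).toReal ∂ρ)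
  else ⊤

/-- Squared 2-Wasserstein distance. -/
def W2sq {d : ℕ} (μ ν : Measure (Euc d)) : ℝ≥0∞ :=
  ⨅ (π : Measure (Euc d × Euc d)) (_ : π.fst = μ ∧ π.snd = ν),
    ∫⁻ p, ENNReal.ofReal (‖p.1 - p.2‖ ^ 2) ∂π

/-!
Write `ρ ∈ 𝒫₂(ℝᵈ)` as the translate of a measure `κ` with barycenter `η̄`, and let `m` be the
barycenter of `ρ`. Translating `κ` splits both terms of the objective into a centered part and an
explicit function of the mean:
`H(ρ | γ_y) = H(κ | γ_η̄) + |m - y|² / 2` and `W₂²(ρ, η) = W₂²(κ, η) + |m - η̄|²`.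
With `E` the infimum of `H(κ | γ_η̄) + (β / 2) W₂²(κ, η)` over `κ̄ = η̄`, minimizing in `m` turns
the inner infimum into `E + β / (2 (1 + β)) |y - η̄|²`. The penalty `-(β / 2) |x - y|²` makes it
concave in `y`, with maximal value `E + |η̄ - x|² / 2`, and this is the constrained infimum at `x`.
-/

section KullbackLeibler

open InformationTheory Real

variable {α β : Type*} {mα : MeasurableSpace α} {mβ : MeasurableSpace β}

lemma klDiv_map_measurableEquiv (μ ν : Measure α) [IsFiniteMeasure μ] [IsFiniteMeasure ν]
    (e : α ≃ᵐ β) : klDiv (μ.map e) (ν.map e) = klDiv μ ν := by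
  refine le_antisymm (klDiv_map_le μ ν e.measurable) ?_
  simpa only [e.map_symm_map] using klDiv_map_le (μ.map e) (ν.map e) e.symm.measurable

lemma klDiv_tilted_right {μ ν : Measure α} [IsProbabilityMeasure μ] [IsProbabilityMeasure ν]
    {f : α → ℝ} (hfμ : Integrable f μ) (hfν : Integrable (fun x => exp (f x)) ν)
    (hf : 0 ≤ log (∫ x, exp (f x) ∂ν) - ∫ x, f x ∂μ) :
    klDiv μ (ν.tilted f)
      = klDiv μ ν + ENNReal.ofReal (log (∫ x, exp (f x) ∂ν) - ∫ x, f x ∂μ) := by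
  have := isProbabilityMeasure_tilted hfν
  have hac_iff : μ ≪ ν.tilted f ↔ μ ≪ ν :=
    ⟨fun h => h.trans (tilted_absolutelyContinuous ν f),
      fun h => h.trans (absolutelyContinuous_tilted hfν)⟩
  by_cases hac : μ ≪ ν
  swap
  · rw [klDiv_of_not_ac hac, klDiv_of_not_ac (mt hac_iff.1 hac), top_add]
  have hint_iff : Integrable (llr μ (ν.tilted f)) μ ↔ Integrable (llr μ ν) μ := by
    rw [integrable_congr (llr_tilted_right hac hfν)]
    exact integrable_add_iff_integrable_right (hfμ.neg.add (integrable_const _))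
  by_cases hint : Integrable (llr μ ν) μ
  swap
  · rw [klDiv_of_not_integrable hint, klDiv_of_not_integrable (mt hint_iff.1 hint), top_add]
  have hnonneg : 0 ≤ ∫ x, llr μ ν x ∂μ := by
    simpa using integral_llr_add_sub_measure_univ_nonneg hac hint
  rw [klDiv_of_ac_of_integrable (hac_iff.2 hac) (hint_iff.2 hint),
    klDiv_of_ac_of_integrable hac hint, integral_llr_tilted_right hac hfμ hfν hint]
  simp only [probReal_univ, add_sub_cancel_right]
  rw [← ENNReal.ofReal_add hnonneg hf]
  congr 1
  ring

end KullbackLeibler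

section Tilted

variable {α β : Type*} {mα : MeasurableSpace α} {mβ : MeasurableSpace β}

lemma tilted_comp_map_measurableEquiv (μ : Measure α) (e : α ≃ᵐ β) (f : β → ℝ) :
    (μ.tilted (f ∘ e)).map e = (μ.map e).tilted f := by
  ext s hs
  rw [e.map_apply, tilted_apply' _ _ (e.measurable hs), tilted_apply' _ _ hs, e.restrict_map,
    lintegral_map_equiv, integral_map_equiv]
  rfl

lemma tilted_add_const (μ : Measure α) (f : α → ℝ) (c : ℝ) :
    μ.tilted (fun x => f x + c) = μ.tilted f := by
  simp only [Measure.tilted, Real.exp_add, integral_mul_const,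
    mul_div_mul_right _ _ (Real.exp_ne_zero c)]

end Tilted

section Shift

variable {G : Type*} [AddGroup G] [MeasurableSpace G] [MeasurableAdd G]

/-- The translate of the measure `μ` by `a`: the law of `X + a` when `X` has law `μ`. -/
def shift (a : G) (μ : Measure G) : Measure G := μ.map (MeasurableEquiv.addRight a)

lemma shift_shift (a b : G) (μ : Measure G) :
    shift b (shift a μ) = shift (a + b) μ := by
  rw [shift, shift, Measure.map_map (by fun_prop) (by fun_prop)]
  congr 1
  ext w
  simp [add_assoc]

lemma shift_zero (μ : Measure G) : shift 0 μ = μ := by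
  simp [shift, Measure.map_id']

instance (a : G) (μ : Measure G) [IsProbabilityMeasure μ] :
    IsProbabilityMeasure (shift a μ) :=
  Measure.isProbabilityMeasure_map (by fun_prop)

end Shift

section Moments

variable {d : ℕ} {μ : Measure (Euc d)}

lemma finiteSecondMoment_iff_memLp : FiniteSecondMoment μ ↔ MemLp (fun w => w) 2 μ := by
  rw [memLp_two_iff_integrable_sq_norm (by fun_prop), Integrable,
    hasFiniteIntegral_iff_ofReal (ae_of_all _ fun w => sq_nonneg ‖w‖)]
  exact (and_iff_right (by fun_prop)).symm

lemma FiniteSecondMoment.integrable [IsFiniteMeasure μ] (h : FiniteSecondMoment μ) :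
    Integrable (fun w => w) μ :=
  (finiteSecondMoment_iff_memLp.1 h).integrable one_le_two

lemma FiniteSecondMoment.shift [IsFiniteMeasure μ] (h : FiniteSecondMoment μ) (a : Euc d) :
    FiniteSecondMoment (shift a μ) := by
  rw [finiteSecondMoment_iff_memLp, _root_.shift,
    memLp_map_measure_iff (by fun_prop) (by fun_prop)]
  exact (finiteSecondMoment_iff_memLp.1 h).add (memLp_const a)

lemma bary_shift [IsProbabilityMeasure μ] (h : Integrable (fun w => w) μ) (a : Euc d) :
    bary (shift a μ) = bary μ + a := by
  rw [bary, bary, shift, integral_map_equiv]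
  simp [integral_add h (integrable_const a)]

end Moments

section Gaussian

open Real

variable {d : ℕ}

lemma integral_exp_neg_sq_norm_sub (x : Euc d) :
    ∫ w, exp (-‖w - x‖ ^ 2 / 2) = (2 * π) ^ ((d : ℝ) / 2) := by
  rw [integral_sub_right_eq_self (fun w : Euc d => exp (-‖w‖ ^ 2 / 2)) x]
  have h := GaussianFourier.integral_rexp_neg_mul_sq_norm (V := Euc d) (b := 1 / 2) (by norm_num)
  rw [finrank_euclideanSpace_fin, div_div_eq_mul_div, div_one, mul_comm π 2] at h
  rw [← h]
  congr! 3
  ring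

lemma integrable_exp_neg_sq_norm_sub (x : Euc d) :
    Integrable fun w : Euc d => exp (-‖w - x‖ ^ 2 / 2) :=
  .of_integral_ne_zero (by rw [integral_exp_neg_sq_norm_sub]; positivity)

lemma gaussian_eq_tilted (x : Euc d) :
    gaussian x = volume.tilted fun w => -‖w - x‖ ^ 2 / 2 := by
  simp only [gaussian, Measure.tilted, gaussDensity, integral_exp_neg_sq_norm_sub,
    div_eq_inv_mul (exp _), neg_div (2 : ℝ) (d : ℝ), rpow_neg two_pi_pos.le]

instance (x : Euc d) : IsProbabilityMeasure (gaussian x) := by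
  rw [gaussian_eq_tilted]
  exact isProbabilityMeasure_tilted (integrable_exp_neg_sq_norm_sub x)

lemma shift_gaussian (a x : Euc d) : shift a (gaussian x) = gaussian (x + a) := by
  have hcomp : (fun w => -‖w - x‖ ^ 2 / 2)
      = (fun w => -‖w - (x + a)‖ ^ 2 / 2) ∘ MeasurableEquiv.addRight a := by
    ext w
    simp
  rw [gaussian_eq_tilted, gaussian_eq_tilted, shift, hcomp, tilted_comp_map_measurableEquiv,
    MeasurableEquiv.coe_addRight, map_add_right_eq_self]

lemma neg_sq_norm_sub_div_two_add_inner (x b w : Euc d) :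
    -‖w - x‖ ^ 2 / 2 + ⟪b, w⟫ = -‖w - (x + b)‖ ^ 2 / 2 + (⟪b, x⟫ + ‖b‖ ^ 2 / 2) := by
  rw [← sub_sub, norm_sub_sq_real (w - x) b, inner_sub_left, real_inner_comm b w,
    real_inner_comm b x]
  ring

lemma integral_exp_inner_gaussian (x b : Euc d) :
    ∫ w, exp ⟪b, w⟫ ∂(gaussian x) = exp (⟪b, x⟫ + ‖b‖ ^ 2 / 2) := by
  rw [gaussian_eq_tilted, integral_exp_tilted]
  simp only [Pi.add_apply, neg_sq_norm_sub_div_two_add_inner, exp_add _ (⟪b, x⟫ + _),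
    integral_mul_const, integral_exp_neg_sq_norm_sub]
  exact mul_div_cancel_left₀ _ (by positivity)

lemma gaussian_tilted_inner (x b : Euc d) :
    (gaussian x).tilted (fun w => ⟪b, w⟫) = gaussian (x + b) := by
  rw [gaussian_eq_tilted, gaussian_eq_tilted, tilted_tilted (integrable_exp_neg_sq_norm_sub x)]
  simp only [Pi.add_def, neg_sq_norm_sub_div_two_add_inner, tilted_add_const]

end Gaussian

section Entropy

open InformationTheory

variable {d : ℕ}

lemma relEnt_eq_klDiv (ρ η : Measure (Euc d)) [IsProbabilityMeasure ρ] [IsProbabilityMeasure η] :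
    relEnt ρ η = klDiv ρ η := by
  simp only [relEnt, klDiv, llr_def, probReal_univ, add_sub_cancel_right]
  congr

lemma relEnt_shift_gaussian (ρ : Measure (Euc d)) [IsProbabilityMeasure ρ] (a y : Euc d) :
    relEnt (shift a ρ) (gaussian (y + a)) = relEnt ρ (gaussian y) := by
  rw [relEnt_eq_klDiv, relEnt_eq_klDiv, ← shift_gaussian]
  exact klDiv_map_measurableEquiv ρ (gaussian y) _

/-- `γ_y` is the exponential tilt of `γ_{ρ̄}` by a linear function, whose `ρ`-integral only sees
the barycenter. -/
lemma relEnt_gaussian_eq_add_sq_norm_sub {ρ : Measure (Euc d)} [IsProbabilityMeasure ρ]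
    (h : Integrable (fun w => w) ρ) (y : Euc d) :
    relEnt ρ (gaussian y)
      = relEnt ρ (gaussian (bary ρ)) + ENNReal.ofReal (‖bary ρ - y‖ ^ 2 / 2) := by
  have hlog : Real.log (∫ w, Real.exp ⟪y - bary ρ, w⟫ ∂gaussian (bary ρ))
      - ∫ w, ⟪y - bary ρ, w⟫ ∂ρ = ‖bary ρ - y‖ ^ 2 / 2 := by
    rw [integral_exp_inner_gaussian, Real.log_exp, integral_inner h, ← bary, norm_sub_rev,
      add_sub_cancel_left]
  have hexp : Integrable (fun w => Real.exp ⟪y - bary ρ, w⟫) (gaussian (bary ρ)) :=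
    .of_integral_ne_zero (by rw [integral_exp_inner_gaussian]; positivity)
  rw [relEnt_eq_klDiv, relEnt_eq_klDiv, ← hlog,
    ← klDiv_tilted_right (h.const_inner _) hexp (by rw [hlog]; positivity),
    gaussian_tilted_inner, add_sub_cancel]

end Entropy

section SecondMoment

lemma lintegral_sq_norm_add_const {Ω E : Type*} {mΩ : MeasurableSpace Ω} {P : Measure Ω}
    [IsProbabilityMeasure P] [NormedAddCommGroup E] [InnerProductSpace ℝ E] [CompleteSpace E]
    {X : Ω → E} (hX : MemLp X 2 P) (hX0 : ∫ ω, X ω ∂P = 0) (a : E) :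
    ∫⁻ ω, ENNReal.ofReal (‖X ω + a‖ ^ 2) ∂P
      = ∫⁻ ω, ENNReal.ofReal (‖X ω‖ ^ 2) ∂P + ENNReal.ofReal (‖a‖ ^ 2) := by
  have hXi : Integrable X P := hX.integrable one_le_two
  have hsq := (memLp_two_iff_integrable_sq_norm hX.1).1 hX
  have hinner : Integrable (fun ω => 2 * ⟪a, X ω⟫) P := (hXi.const_inner a).const_mul 2
  have hsum : Integrable (fun ω => ‖X ω‖ ^ 2 + 2 * ⟪a, X ω⟫) P := hsq.add hinner
  have hsq_add := (memLp_two_iff_integrable_sq_norm (hX.1.add_const a)).1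
    (hX.add (memLp_const a))
  rw [← ofReal_integral_eq_lintegral_ofReal hsq_add (ae_of_all _ fun ω => sq_nonneg _),
    ← ofReal_integral_eq_lintegral_ofReal hsq (ae_of_all _ fun ω => sq_nonneg _),
    ← ENNReal.ofReal_add (integral_nonneg fun ω => sq_nonneg _) (sq_nonneg _)]
  congr 1
  simp_rw [norm_add_sq_real, real_inner_comm a]
  rw [integral_add hsum (integrable_const _), integral_add hsq hinner,
    integral_const_mul, integral_inner hXi, hX0]
  simp

end SecondMoment

section ShiftFst

variable {G α : Type*} [AddGroup G] [MeasurableSpace G] [MeasurableAdd G] {mα : MeasurableSpace α}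

/-- The coupling of `shift a μ` and `ν` obtained from a coupling `π` of `μ` and `ν` by
translating the first coordinate. -/
def shiftFst (a : G) (π : Measure (G × α)) : Measure (G × α) :=
  π.map fun p => (p.1 + a, p.2)

lemma fst_shiftFst (a : G) (π : Measure (G × α)) :
    (shiftFst a π).fst = shift a π.fst := by
  rw [shiftFst, shift, Measure.fst, Measure.fst, Measure.map_map (by fun_prop) (by fun_prop),
    Measure.map_map (by fun_prop) (by fun_prop)]
  rfl

lemma snd_shiftFst (a : G) (π : Measure (G × α)) : (shiftFst a π).snd = π.snd := by
  rw [shiftFst, Measure.snd, Measure.snd, Measure.map_map (by fun_prop) (by fun_prop)]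
  rfl

lemma shiftFst_neg_shiftFst (a : G) (π : Measure (G × α)) :
    shiftFst a (shiftFst (-a) π) = π := by
  rw [shiftFst, shiftFst, Measure.map_map (by fun_prop) (by fun_prop)]
  simp [Function.comp_def, Measure.map_id']

end ShiftFst

section Wasserstein

variable {d : ℕ}

lemma lintegral_cost_shiftFst {π : Measure (Euc d × Euc d)} [IsProbabilityMeasure π]
    (h₁ : FiniteSecondMoment π.fst) (h₂ : FiniteSecondMoment π.snd)
    (hbary : bary π.fst = bary π.snd) (a : Euc d) :
    ∫⁻ p, ENNReal.ofReal (‖p.1 - p.2‖ ^ 2) ∂shiftFst a π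
      = ∫⁻ p, ENNReal.ofReal (‖p.1 - p.2‖ ^ 2) ∂π + ENNReal.ofReal (‖a‖ ^ 2) := by
  have hfst : MemLp (fun p : Euc d × Euc d => p.1) 2 π :=
    (finiteSecondMoment_iff_memLp.1 h₁).comp_of_map measurable_fst.aemeasurable
  have hsnd : MemLp (fun p : Euc d × Euc d => p.2) 2 π :=
    (finiteSecondMoment_iff_memLp.1 h₂).comp_of_map measurable_snd.aemeasurable
  have hmean : ∫ p : Euc d × Euc d, (p.1 - p.2) ∂π = 0 := by
    rw [integral_sub (hfst.integrable one_le_two) (hsnd.integrable one_le_two), sub_eq_zero]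
    rwa [bary, bary, Measure.fst, Measure.snd, integral_map (by fun_prop) (by fun_prop),
      integral_map (by fun_prop) (by fun_prop)] at hbary
  rw [shiftFst, lintegral_map (by fun_prop) (by fun_prop)]
  simpa only [add_sub_right_comm, Pi.sub_apply]
    using lintegral_sq_norm_add_const (hfst.sub hsnd) hmean a

lemma W2sq_shift_of_bary_eq {μ ν : Measure (Euc d)} [IsProbabilityMeasure μ]
    (hμ : FiniteSecondMoment μ) (hν : FiniteSecondMoment ν) (hbary : bary μ = bary ν) (a : Euc d) :
    W2sq (shift a μ) ν = W2sq μ ν + ENNReal.ofReal (‖a‖ ^ 2) := by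
  have hcost : ∀ π : Measure (Euc d × Euc d), π.fst = μ → π.snd = ν →
      ∫⁻ p, ENNReal.ofReal (‖p.1 - p.2‖ ^ 2) ∂shiftFst a π
        = ∫⁻ p, ENNReal.ofReal (‖p.1 - p.2‖ ^ 2) ∂π + ENNReal.ofReal (‖a‖ ^ 2) := by
    rintro π rfl rfl
    have : IsProbabilityMeasure π := ⟨by rw [← Measure.fst_univ, measure_univ]⟩
    exact lintegral_cost_shiftFst hμ hν hbary a
  rw [W2sq, W2sq, ENNReal.iInf₂_add]
  refine le_antisymm (le_iInf₂ fun π ⟨hfst, hsnd⟩ => ?_) (le_iInf₂ fun π ⟨hfst, hsnd⟩ => ?_)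
  · rw [← hcost π hfst hsnd]
    exact iInf₂_le (shiftFst a π) ⟨by rw [fst_shiftFst, hfst], by rw [snd_shiftFst, hsnd]⟩
  · have hfst' : (shiftFst (-a) π).fst = μ := by
      rw [fst_shiftFst, hfst, shift_shift, add_neg_cancel, shift_zero]
    have hsnd' : (shiftFst (-a) π).snd = ν := by rw [snd_shiftFst, hsnd]
    exact (iInf₂_le (shiftFst (-a) π) ⟨hfst', hsnd'⟩).trans_eq
      (by rw [← hcost _ hfst' hsnd', shiftFst_neg_shiftFst])

end Wasserstein

section Quadratic

variable {E : Type*} [NormedAddCommGroup E] [InnerProductSpace ℝ E] {β : ℝ}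

lemma isLeast_range_half_sq_norm_sub_add (hβ : 0 ≤ β) (y c : E) :
    IsLeast (range fun m => ‖m - y‖ ^ 2 / 2 + β / 2 * ‖m - c‖ ^ 2)
      (β / (2 * (1 + β)) * ‖y - c‖ ^ 2) := by
  have hβ₁ : 1 + β ≠ 0 := by positivity
  have completed_square (m : E) : ‖m - y‖ ^ 2 / 2 + β / 2 * ‖m - c‖ ^ 2
      = β / (2 * (1 + β)) * ‖y - c‖ ^ 2
        + ‖(1 + β) • (m - c) - (y - c)‖ ^ 2 / (2 * (1 + β)) := by
    rw [← sub_sub_sub_cancel_right m y c]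
    generalize m - c = p, y - c = q
    rw [norm_sub_sq_real, norm_sub_sq_real, norm_smul, mul_pow,
      Real.norm_eq_abs, sq_abs, real_inner_smul_left]
    field_simp
    ring
  refine ⟨⟨c + (1 + β)⁻¹ • (y - c), (completed_square _).trans (by simp [hβ₁])⟩, ?_⟩
  rintro _ ⟨m, rfl⟩
  exact (le_add_of_nonneg_right (by positivity)).trans_eq (completed_square m).symm

lemma isGreatest_range_neg_sq_norm_sub_add (hβ : 0 < β) (x c : E) :
    IsGreatest (range fun y => -(β / 2 * ‖x - y‖ ^ 2) + β / (2 * (1 + β)) * ‖y - c‖ ^ 2)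
      (‖c - x‖ ^ 2 / 2) := by
  have completed_square (y : E) :
      -(β / 2 * ‖x - y‖ ^ 2) + β / (2 * (1 + β)) * ‖y - c‖ ^ 2
        = ‖c - x‖ ^ 2 / 2 - ‖β • (y - c) - (1 + β) • (x - c)‖ ^ 2 / (2 * (1 + β)) := by
    rw [norm_sub_rev c x, ← sub_sub_sub_cancel_right x y c]
    generalize x - c = p, y - c = q
    rw [norm_sub_sq_real, norm_sub_sq_real,
      norm_smul, norm_smul, mul_pow, mul_pow, Real.norm_eq_abs, Real.norm_eq_abs, sq_abs, sq_abs,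
      real_inner_smul_left, real_inner_smul_right, real_inner_comm p]
    field_simp
    ring
  refine ⟨⟨c + β⁻¹ • (1 + β) • (x - c), (completed_square _).trans (by simp [hβ.ne'])⟩, ?_⟩
  rintro _ ⟨y, rfl⟩
  exact (completed_square y).trans_le (sub_le_self _ (by positivity))

end Quadratic

section Extremum

variable {ι : Sort*} {α β : Type*} [Preorder α] [CompleteLattice β]

lemma iInf_monotone_comp_of_isLeast {f : α → β} {g : ι → α} {v : α} (hf : Monotone f)
    (hg : IsLeast (range g) v) : ⨅ i, f (g i) = f v := by
  have h := hf.map_isLeast hg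
  rw [← range_comp] at h
  exact h.isGLB.iInf_eq

lemma iSup_monotone_comp_of_isGreatest {f : α → β} {g : ι → α} {v : α} (hf : Monotone f)
    (hg : IsGreatest (range g) v) : ⨆ i, f (g i) = f v :=
  iInf_monotone_comp_of_isLeast (β := βᵒᵈ) (α := αᵒᵈ) hf.dual hg

end Extremum

section EReal

lemma coe_ennreal_iInf_ereal {ι : Sort*} (f : ι → ℝ≥0∞) :
    ((⨅ i, f i : ℝ≥0∞) : EReal) = ⨅ i, (f i : EReal) :=
  Monotone.map_iInf_of_continuousAt continuous_coe_ennreal_ereal.continuousAt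
    EReal.coe_ennreal_strictMono.monotone EReal.coe_ennreal_top

lemma coe_ennreal_add_ofReal_ereal (e : ℝ≥0∞) {r : ℝ} (hr : 0 ≤ r) :
    ((e + ENNReal.ofReal r : ℝ≥0∞) : EReal) = e + r := by
  rw [EReal.coe_ennreal_add, EReal.coe_ennreal_ofReal, max_eq_left hr]

end EReal

section EntropicCost

variable {d : ℕ} {β : ℝ}

/-- The objective `H(ρ | γ_y) + (β / 2) W₂²(ρ, η)` of both minimization problems. -/
def entropicCost (β : ℝ) (y : Euc d) (η ρ : Measure (Euc d)) : ℝ≥0∞ :=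
  relEnt ρ (gaussian y) + ENNReal.ofReal (β / 2) * W2sq ρ η

/-- The infimum of `entropicCost` over all `ρ ∈ 𝒫₂(ℝᵈ)`. -/
def entropicEnvelope (β : ℝ) (y : Euc d) (η : Measure (Euc d)) : ℝ≥0∞ :=
  ⨅ (ρ : Measure (Euc d)) (_ : IsProbabilityMeasure ρ ∧ FiniteSecondMoment ρ),
    entropicCost β y η ρ

/-- The infimum of `entropicCost` over the `κ ∈ 𝒫₂(ℝᵈ)` having the same barycenter as `η`. -/
def centeredEnvelope (β : ℝ) (y : Euc d) (η : Measure (Euc d)) : ℝ≥0∞ :=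
  ⨅ (κ : Measure (Euc d)) (_ : IsProbabilityMeasure κ ∧ FiniteSecondMoment κ ∧ bary κ = bary η),
    entropicCost β y η κ

variable {η : Measure (Euc d)}

lemma entropicCost_shift (hβ : 0 ≤ β) (hη : FiniteSecondMoment η) {κ : Measure (Euc d)}
    [IsProbabilityMeasure κ] (hκ : FiniteSecondMoment κ) (hbary : bary κ = bary η)
    (y m : Euc d) :
    entropicCost β y η (shift (m - bary η) κ)
      = entropicCost β (bary η) η κ
        + ENNReal.ofReal (‖m - y‖ ^ 2 / 2 + β / 2 * ‖m - bary η‖ ^ 2) := by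
  have hmean : bary (shift (m - bary η) κ) = m := by
    rw [bary_shift hκ.integrable, hbary, add_sub_cancel]
  have hent : relEnt (shift (m - bary η) κ) (gaussian y)
      = relEnt κ (gaussian (bary η)) + ENNReal.ofReal (‖m - y‖ ^ 2 / 2) := by
    rw [relEnt_gaussian_eq_add_sq_norm_sub (hκ.shift _).integrable, hmean,
      ← relEnt_shift_gaussian κ (m - bary η), add_sub_cancel]
  rw [entropicCost, entropicCost, hent, W2sq_shift_of_bary_eq hκ hη hbary, mul_add,
    ← ENNReal.ofReal_mul (by positivity), ENNReal.ofReal_add (by positivity) (by positivity),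
    add_add_add_comm]

lemma iInf_eq_iInf_centered_iInf_shift {α : Type*} [CompleteLattice α]
    (F : Measure (Euc d) → α) (c : Euc d) :
    ⨅ (ρ : Measure (Euc d)) (_ : IsProbabilityMeasure ρ ∧ FiniteSecondMoment ρ), F ρ
      = ⨅ (κ : Measure (Euc d)) (_ : IsProbabilityMeasure κ ∧ FiniteSecondMoment κ ∧ bary κ = c),
          ⨅ m : Euc d, F (shift (m - c) κ) := by
  apply le_antisymm
  · refine le_iInf₂ fun κ ⟨_, hκ, _⟩ => le_iInf fun m => ?_
    exact iInf₂_le (shift (m - c) κ) ⟨inferInstance, hκ.shift _⟩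
  · refine le_iInf₂ fun ρ ⟨_, hρ⟩ => ?_
    have hbary : bary (shift (c - bary ρ) ρ) = c := by
      rw [bary_shift hρ.integrable, add_sub_cancel]
    refine (iInf₂_le (shift (c - bary ρ) ρ) ⟨inferInstance, hρ.shift _, hbary⟩).trans
      (iInf_le_of_le (bary ρ) ?_)
    rw [shift_shift, sub_add_sub_cancel, sub_self, shift_zero]

lemma entropicEnvelope_eq (hβ : 0 ≤ β) (hη : FiniteSecondMoment η) (y : Euc d) :
    entropicEnvelope β y η
      = centeredEnvelope β (bary η) η
        + ENNReal.ofReal (β / (2 * (1 + β)) * ‖y - bary η‖ ^ 2) := by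
  rw [entropicEnvelope, iInf_eq_iInf_centered_iInf_shift _ (bary η), centeredEnvelope,
    ENNReal.iInf₂_add]
  refine iInf_congr fun κ => iInf_congr fun ⟨_, hκ, hbary⟩ => ?_
  simp only [entropicCost_shift hβ hη hκ hbary, ← ENNReal.add_iInf]
  rw [iInf_monotone_comp_of_isLeast (fun _ _ h => ENNReal.ofReal_le_ofReal h)
    (isLeast_range_half_sq_norm_sub_add hβ y (bary η))]

lemma centeredEnvelope_eq (β : ℝ) (η : Measure (Euc d)) (x : Euc d) :
    centeredEnvelope β x η
      = centeredEnvelope β (bary η) η + ENNReal.ofReal (‖bary η - x‖ ^ 2 / 2) := by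
  rw [centeredEnvelope, centeredEnvelope, ENNReal.iInf₂_add]
  refine iInf_congr fun κ => iInf_congr fun ⟨_, hκ, hbary⟩ => ?_
  rw [entropicCost, entropicCost, relEnt_gaussian_eq_add_sq_norm_sub hκ.integrable, hbary,
    add_right_comm]

end EntropicCost

/-- Sup-inf representation of the static Schrödinger--Bass cost. -/
theorem sup_inf_SB_cost {d : ℕ} (β : ℝ) (hβ : 0 < β) (x : Euc d)
    (η : Measure (Euc d)) [IsProbabilityMeasure η] (hη : FiniteSecondMoment η) :
    (⨆ y : Euc d,
        (((-(β / 2 * ‖x - y‖ ^ 2) : ℝ) : EReal)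
          + ⨅ (ρ : Measure (Euc d)) (_ : IsProbabilityMeasure ρ ∧ FiniteSecondMoment ρ),
              ((relEnt ρ (gaussian y) + ENNReal.ofReal (β / 2) * W2sq ρ η : ℝ≥0∞) : EReal)))
      = ⨅ (κ : Measure (Euc d))
          (_ : IsProbabilityMeasure κ ∧ FiniteSecondMoment κ ∧ bary κ = bary η),
          ((relEnt κ (gaussian x) + ENNReal.ofReal (β / 2) * W2sq κ η : ℝ≥0∞) : EReal) := by
  simp only [← coe_ennreal_iInf_ereal]
  change ⨆ y, (_ + (entropicEnvelope β y η : EReal)) = centeredEnvelope β x η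
  calc ⨆ y, (((-(β / 2 * ‖x - y‖ ^ 2) : ℝ) : EReal) + (entropicEnvelope β y η : EReal))
      = ⨆ y, ((centeredEnvelope β (bary η) η : EReal)
          + (-(β / 2 * ‖x - y‖ ^ 2) + β / (2 * (1 + β)) * ‖y - bary η‖ ^ 2 : ℝ)) := by
        refine iSup_congr fun y => ?_
        rw [entropicEnvelope_eq hβ.le hη, coe_ennreal_add_ofReal_ereal _ (by positivity),
          add_left_comm, EReal.coe_add]
    _ = centeredEnvelope β (bary η) η + (‖bary η - x‖ ^ 2 / 2 : ℝ) :=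
        iSup_monotone_comp_of_isGreatest
          (f := fun r : ℝ => (centeredEnvelope β (bary η) η : EReal) + r)
          (EReal.coe_strictMono.monotone.const_add _)
          (isGreatest_range_neg_sq_norm_sub_add hβ x (bary η))
    _ = centeredEnvelope β x η := by
        rw [centeredEnvelope_eq β η x, coe_ennreal_add_ofReal_ereal _ (by positivity)]
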